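/- Let Y be a nonempty finite set, τ > 0, and s, r : Y → ℝ with s ≠ r. Let p = softmax_τ(s) and q = softmax_τ(r). Then KL(p ‖ q) < KL(q ‖ p) + (1/τ²)·‖s − r‖₂², where ‖s − r‖₂² = Σ_{y∈Y} (s(y) − r(y))². -/

import Mathlib

/-!
Write `d = (s - r) / τ`. Adding `2 KL(q ‖ p) ≥ 0` to `KL(p ‖ q) - KL(q ‖ p)` bounds the latter by the
symmetric divergence `KL(p ‖ q) + KL(q ‖ p)`, and the log-normalisers cancel there, so that it
equals `∑ p d - ∑ q d` (`klDiv_add_klDiv_swap`).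

This is the increment over `[0, 1]` of the mean of `d` under the Gibbs measures
`softmax τ (r + x (s - r))`, whose derivative in `x` is the variance of `d`
(`hasDerivAt_sum_softmax_mul`). By the mean value theorem the increment is the variance of `d`
under some fully supported distribution, which is strictly below `∑ d²` unless `d = 0`
(`variance_lt_sum_sq`).
-/

open Finset

/-- `softmax τ u` is the probability distribution proportional to `exp (u y / τ)`. -/
noncomputable def softmax {Y : Type*} [Fintype Y] (τ : ℝ) (u : Y → ℝ) (y : Y) : ℝ :=
  Real.exp (u y / τ) / ∑ y', Real.exp (u y' / τ)

/-- KL divergence between two distributions on a finite set. -/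
noncomputable def klDiv {Y : Type*} [Fintype Y] (p q : Y → ℝ) : ℝ :=
  ∑ y, p y * Real.log (p y / q y)

lemma softmax_pos {Y : Type*} [Fintype Y] [Nonempty Y] (τ : ℝ) (u : Y → ℝ) (y : Y) :
    0 < softmax τ u y :=
  div_pos (Real.exp_pos _) (sum_pos (fun _ _ => Real.exp_pos _) univ_nonempty)

lemma sum_softmax {Y : Type*} [Fintype Y] [Nonempty Y] (τ : ℝ) (u : Y → ℝ) :
    ∑ y, softmax τ u y = 1 := by
  have h : 0 < ∑ y, Real.exp (u y / τ) :=
    sum_pos (fun _ _ => Real.exp_pos _) univ_nonempty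
  simp only [softmax]
  rw [← sum_div, div_self h.ne']

lemma log_softmax {Y : Type*} [Fintype Y] [Nonempty Y] (τ : ℝ) (u : Y → ℝ) (y : Y) :
    Real.log (softmax τ u y) = u y / τ - Real.log (∑ y', Real.exp (u y' / τ)) := by
  have h : 0 < ∑ y, Real.exp (u y / τ) :=
    sum_pos (fun _ _ => Real.exp_pos _) univ_nonempty
  rw [softmax, Real.log_div (Real.exp_pos _).ne' h.ne', Real.log_exp]

/-- Gibbs' inequality, from `log x ≤ x - 1`. -/
lemma klDiv_nonneg_of_pos {Y : Type*} [Fintype Y] {p q : Y → ℝ} (hp : ∀ y, 0 < p y)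
    (hq : ∀ y, 0 < q y) (hp1 : ∑ y, p y = 1) (hq1 : ∑ y, q y = 1) : 0 ≤ klDiv p q := by
  have h : ∑ y, (p y - q y) ≤ klDiv p q := by
    refine sum_le_sum fun y _ => ?_
    have h1 := Real.log_le_sub_one_of_pos (div_pos (hq y) (hp y))
    have h2 : Real.log (p y / q y) = -Real.log (q y / p y) := by
      rw [← Real.log_inv, inv_div]
    have h3 := mul_le_mul_of_nonneg_left h1 (hp y).le
    have h4 : p y * (q y / p y - 1) = q y - p y := by
      have := (hp y).ne'
      field_simp
    rw [h2]
    linarith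
  rw [sum_sub_distrib, hp1, hq1] at h
  linarith

lemma klDiv_add_klDiv_swap {Y : Type*} [Fintype Y] [Nonempty Y] (τ : ℝ) (s r : Y → ℝ) :
    klDiv (softmax τ s) (softmax τ r) + klDiv (softmax τ r) (softmax τ s)
      = ∑ y, softmax τ s y * ((s y - r y) / τ) - ∑ y, softmax τ r y * ((s y - r y) / τ) := by
  set c := Real.log (∑ y', Real.exp (s y' / τ)) - Real.log (∑ y', Real.exp (r y' / τ)) with hc
  have h : klDiv (softmax τ s) (softmax τ r) + klDiv (softmax τ r) (softmax τ s)
      = ∑ y, (softmax τ s y * ((s y - r y) / τ) - softmax τ r y * ((s y - r y) / τ)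
          - (softmax τ s y * c - softmax τ r y * c)) := by
    rw [klDiv, klDiv, ← sum_add_distrib]
    refine sum_congr rfl fun y _ => ?_
    rw [Real.log_div (softmax_pos τ s y).ne' (softmax_pos τ r y).ne',
      Real.log_div (softmax_pos τ r y).ne' (softmax_pos τ s y).ne', log_softmax, log_softmax, hc]
    ring
  rw [h]
  simp only [sum_sub_distrib, ← sum_mul, sum_softmax]
  ring

/-- Along the exponential family through `r` and `s`, the derivative of the mean of the tilting
function is its variance. -/
lemma hasDerivAt_sum_softmax_mul {Y : Type*} [Fintype Y] [Nonempty Y] (τ : ℝ) (s r : Y → ℝ)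
    (x : ℝ) :
    HasDerivAt
      (fun x => ∑ y, softmax τ (fun y => r y + x * (s y - r y)) y * ((s y - r y) / τ))
      (∑ y, softmax τ (fun y => r y + x * (s y - r y)) y * ((s y - r y) / τ) ^ 2
        - (∑ y, softmax τ (fun y => r y + x * (s y - r y)) y * ((s y - r y) / τ)) ^ 2) x := by
  have he : ∀ y, HasDerivAt (fun x : ℝ => Real.exp ((r y + x * (s y - r y)) / τ))
      (Real.exp ((r y + x * (s y - r y)) / τ) * ((s y - r y) / τ)) x := fun y => by
    have h := ((((hasDerivAt_id x).mul_const (s y - r y)).const_add (r y)).div_const τ).exp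
    simpa using h
  have hZ : HasDerivAt (fun x : ℝ => ∑ y, Real.exp ((r y + x * (s y - r y)) / τ))
      (∑ y, Real.exp ((r y + x * (s y - r y)) / τ) * ((s y - r y) / τ)) x :=
    HasDerivAt.fun_sum fun y _ => he y
  have hN : HasDerivAt
      (fun x : ℝ => ∑ y, Real.exp ((r y + x * (s y - r y)) / τ) * ((s y - r y) / τ))
      (∑ y, Real.exp ((r y + x * (s y - r y)) / τ) * ((s y - r y) / τ) * ((s y - r y) / τ)) x :=
    HasDerivAt.fun_sum fun y _ => (he y).mul_const _
  have hpos : 0 < ∑ y, Real.exp ((r y + x * (s y - r y)) / τ) :=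
    sum_pos (fun _ _ => Real.exp_pos _) univ_nonempty
  have key : ∀ (x : ℝ) (g : Y → ℝ),
      ∑ y, softmax τ (fun y => r y + x * (s y - r y)) y * g y
        = (∑ y, Real.exp ((r y + x * (s y - r y)) / τ) * g y)
          / ∑ y, Real.exp ((r y + x * (s y - r y)) / τ) := fun x g => by
    rw [sum_div]
    refine sum_congr rfl fun y _ => ?_
    simp only [softmax]
    ring
  simp only [key]
  refine (hN.fun_div hZ hpos.ne').congr_deriv ?_
  have h2 : ∑ y, Real.exp ((r y + x * (s y - r y)) / τ) * ((s y - r y) / τ) ^ 2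
      = ∑ y, Real.exp ((r y + x * (s y - r y)) / τ) * ((s y - r y) / τ) * ((s y - r y) / τ) :=
    sum_congr rfl fun y _ => by ring
  rw [h2]
  have := hpos.ne'
  generalize ∑ y, Real.exp ((r y + x * (s y - r y)) / τ) = Z at *
  field_simp

/-- The gap `∑ d² - Var d` is `∑ (1 - p) d² + (∑ p d)²`. If `d y₀ ≠ 0`, the first term is positive
as soon as there is a second point, and the second term is positive if `y₀` is the only point. -/
lemma variance_lt_sum_sq {Y : Type*} [Fintype Y] {p d : Y → ℝ} (hp : ∀ y, 0 < p y)
    (hp1 : ∑ y, p y = 1) (hd : ∃ y, d y ≠ 0) :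
    ∑ y, p y * d y ^ 2 - (∑ y, p y * d y) ^ 2 < ∑ y, d y ^ 2 := by
  obtain ⟨y₀, h₀⟩ := hd
  have hle : ∀ y, p y ≤ 1 := fun y => by
    rw [← hp1]
    exact single_le_sum (f := p) (fun i _ => (hp i).le) (mem_univ y)
  by_cases h1 : ∃ z, z ≠ y₀
  · obtain ⟨z, hz⟩ := h1
    have hlt : p y₀ < 1 := by
      rw [← hp1]
      exact single_lt_sum (f := p) hz (mem_univ y₀) (mem_univ z) (hp z) fun i _ _ => (hp i).le
    have hs : ∑ y, p y * d y ^ 2 < ∑ y, d y ^ 2 := by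
      refine sum_lt_sum (fun y _ => mul_le_of_le_one_left (sq_nonneg _) (hle y))
        ⟨y₀, mem_univ _, ?_⟩
      exact mul_lt_of_lt_one_left (by positivity) hlt
    linarith [sq_nonneg (∑ y, p y * d y)]
  · push Not at h1
    have hu : (univ : Finset Y) = {y₀} := by
      ext z
      simp [h1 z]
    rw [hu, sum_singleton] at hp1
    simp only [hu, sum_singleton, hp1]
    have : 0 < d y₀ ^ 2 := by positivity
    linarith

theorem kl_reversal_strict_bound {Y : Type*} [Fintype Y] [Nonempty Y]
    (τ : ℝ) (hτ : 0 < τ) (s r : Y → ℝ) (hsr : s ≠ r) :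
    klDiv (softmax τ s) (softmax τ r)
      < klDiv (softmax τ r) (softmax τ s)
        + (1 / τ ^ 2) * ∑ y, (s y - r y) ^ 2 := by
  have hkl := klDiv_nonneg_of_pos (softmax_pos τ r) (softmax_pos τ s) (sum_softmax τ r)
    (sum_softmax τ s)
  have hJ := klDiv_add_klDiv_swap τ s r
  have hd : ∃ y, (s y - r y) / τ ≠ 0 := by
    obtain ⟨y, hy⟩ := Function.ne_iff.mp hsr
    exact ⟨y, div_ne_zero (sub_ne_zero.mpr hy) hτ.ne'⟩
  obtain ⟨x, -, hx⟩ := exists_hasDerivAt_eq_slope _ _ zero_lt_one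
    (fun x _ => (hasDerivAt_sum_softmax_mul τ s r x).continuousAt.continuousWithinAt)
    (fun x _ => hasDerivAt_sum_softmax_mul τ s r x)
  have hv := variance_lt_sum_sq (d := fun y => (s y - r y) / τ)
    (softmax_pos τ (fun y => r y + x * (s y - r y))) (sum_softmax τ _) hd
  simp only [one_mul, zero_mul, add_zero, add_sub_cancel, sub_zero, div_one] at hx
  have hs : (1 / τ ^ 2) * ∑ y, (s y - r y) ^ 2 = ∑ y, ((s y - r y) / τ) ^ 2 := by
    rw [mul_sum]
    exact sum_congr rfl fun y _ => by rw [div_pow]; ring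
  rw [hx] at hv
  rw [hs]
  linarith
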